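/- Every gentle algebra A = kQ/I is Gorenstein: the injective dimension of A as a left A-module and the injective dimension of A as a right A-module are both finite (and equal). -/

import Mathlib

open MulOpposite DirectSum

set_option autoImplicit false

/-- The combinatorial data of a finite quiver together with a set of
length-two relations (`rel a b` means that the length-two path `a·b` lies in
the admissible ideal `I`). -/
structure GentleData : Type 1 where
  V : Type
  A : Type
  [fintypeV : Fintype V]
  [fintypeA : Fintype A]
  [decEqV : DecidableEq V]
  [decEqA : DecidableEq A]
  src : A → V
  tgt : A → V
  rel : A → A → Prop

attribute [instance] GentleData.fintypeV GentleData.fintypeA GentleData.decEqV GentleData.decEqA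

/-- The gentleness conditions on a bound quiver `(Q, I)`:
relations are composable length-two paths; at most two arrows start
(resp. end) at every vertex; for every arrow `β` there is at most one arrow `α`
with `αβ ∉ I` and at most one with `αβ ∈ I`, and dually; and there is a bound
on the length of paths avoiding relations (admissibility). -/
def IsGentle (Q : GentleData) : Prop :=
  (∀ a b, Q.rel a b → Q.tgt a = Q.src b) ∧
  (∀ v : Q.V, Set.ncard {a : Q.A | Q.src a = v} ≤ 2) ∧
  (∀ v : Q.V, Set.ncard {a : Q.A | Q.tgt a = v} ≤ 2) ∧
  (∀ b : Q.A, Set.ncard {a : Q.A | Q.tgt a = Q.src b ∧ ¬ Q.rel a b} ≤ 1) ∧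
  (∀ b : Q.A, Set.ncard {a : Q.A | Q.tgt a = Q.src b ∧ Q.rel a b} ≤ 1) ∧
  (∀ a : Q.A, Set.ncard {b : Q.A | Q.src b = Q.tgt a ∧ ¬ Q.rel a b} ≤ 1) ∧
  (∀ a : Q.A, Set.ncard {b : Q.A | Q.src b = Q.tgt a ∧ Q.rel a b} ≤ 1) ∧
  (∃ N : ℕ, ∀ p : ℕ → Q.A, ¬ ∀ i, i < N → (Q.tgt (p i) = Q.src (p (i+1)) ∧ ¬ Q.rel (p i) (p (i+1))))

/-- Generators of the path algebra: one generator for each vertex (the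
corresponding trivial path) and one for each arrow. -/
inductive GenSym (Q : GentleData) : Type
  | vertex : Q.V → GenSym Q
  | arrow : Q.A → GenSym Q

/-- The defining relations of the algebra `kQ/I`: the trivial paths are
orthogonal idempotents summing to `1`, arrows are compatible with the trivial
paths at their source and target, and the chosen length-two paths vanish. -/
inductive GentleRel (k : Type) [Field k] (Q : GentleData) :
    FreeAlgebra k (GenSym Q) → FreeAlgebra k (GenSym Q) → Prop
  | idem (v : Q.V) : GentleRel k Q
      (FreeAlgebra.ι k (GenSym.vertex v) * FreeAlgebra.ι k (GenSym.vertex v))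
      (FreeAlgebra.ι k (GenSym.vertex v))
  | orth (v w : Q.V) (h : v ≠ w) : GentleRel k Q
      (FreeAlgebra.ι k (GenSym.vertex v) * FreeAlgebra.ι k (GenSym.vertex w)) 0
  | sum_idem : GentleRel k Q (∑ v : Q.V, FreeAlgebra.ι k (GenSym.vertex v)) 1
  | src_mul (a : Q.A) : GentleRel k Q
      (FreeAlgebra.ι k (GenSym.vertex (Q.src a)) * FreeAlgebra.ι k (GenSym.arrow a))
      (FreeAlgebra.ι k (GenSym.arrow a))
  | mul_tgt (a : Q.A) : GentleRel k Q
      (FreeAlgebra.ι k (GenSym.arrow a) * FreeAlgebra.ι k (GenSym.vertex (Q.tgt a)))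
      (FreeAlgebra.ι k (GenSym.arrow a))
  | relation (a b : Q.A) (h : Q.rel a b) : GentleRel k Q
      (FreeAlgebra.ι k (GenSym.arrow a) * FreeAlgebra.ι k (GenSym.arrow b)) 0

/-- The algebra `A = kQ/I` presented by the bound quiver `Q`. -/
abbrev GentleAlgebra (k : Type) [Field k] (Q : GentleData) : Type :=
  RingQuot (GentleRel k Q)

/-- The image in `kQ/I` of a generator. -/
noncomputable def ofGen (k : Type) [Field k] (Q : GentleData) (x : GenSym Q) :
    GentleAlgebra k Q :=
  RingQuot.mkAlgHom k (GentleRel k Q) (FreeAlgebra.ι k x)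

/-- The idempotent `e_v ∈ kQ/I` of a vertex `v`. -/
noncomputable def idemOf (k : Type) [Field k] (Q : GentleData) (v : Q.V) :
    GentleAlgebra k Q :=
  ofGen k Q (GenSym.vertex v)

/-- The element of `kQ/I` given by an arrow `a`. -/
noncomputable def arrOf (k : Type) [Field k] (Q : GentleData) (a : Q.A) :
    GentleAlgebra k Q :=
  ofGen k Q (GenSym.arrow a)

/-- The indecomposable projective right module `e_v A`, as a right submodule
(i.e. `Aᵐᵒᵖ`-submodule) of `A`. -/
noncomputable def vertexModule (k : Type) [Field k] (Q : GentleData) (v : Q.V) :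
    Submodule (GentleAlgebra k Q)ᵐᵒᵖ (GentleAlgebra k Q) :=
  Submodule.span (GentleAlgebra k Q)ᵐᵒᵖ {idemOf k Q v}

/-- The right module `αA` generated by an arrow `α`, as a right submodule of `A`. -/
noncomputable def arrowModule (k : Type) [Field k] (Q : GentleData) (a : Q.A) :
    Submodule (GentleAlgebra k Q)ᵐᵒᵖ (GentleAlgebra k Q) :=
  Submodule.span (GentleAlgebra k Q)ᵐᵒᵖ {arrOf k Q a}

/-- An oriented cycle `c` of length `ℓ` with full relations:
`t(cᵢ) = s(cᵢ₊₁)` and `cᵢ cᵢ₊₁ ∈ I` for all `i` (indices modulo `ℓ`). -/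
def IsOCFCycle (Q : GentleData) {ℓ : ℕ} (c : ZMod ℓ → Q.A) : Prop :=
  ∀ i : ZMod ℓ, Q.tgt (c i) = Q.src (c (i + 1)) ∧ Q.rel (c i) (c (i + 1))

/-- The arrow `a` lies on some oriented cycle with full relations. -/
def OnOCFCycle (Q : GentleData) (a : Q.A) : Prop :=
  ∃ ℓ : ℕ, 1 ≤ ℓ ∧ ∃ c : ZMod ℓ → Q.A, IsOCFCycle Q c ∧ ∃ i : ZMod ℓ, c i = a

/-- The whole quiver `(Q, I)` is an oriented cycle of some length `ℓ ≥ 1` with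
full relations. -/
def QuiverIsOCF (Q : GentleData) : Prop :=
  ∃ ℓ : ℕ, 1 ≤ ℓ ∧ ∃ (e : Q.V ≃ ZMod ℓ) (f : Q.A ≃ ZMod ℓ),
    (∀ a, e (Q.src a) = f a) ∧ (∀ a, e (Q.tgt a) = f a + 1) ∧
    (∀ a b, Q.rel a b ↔ f b = f a + 1)

/-- The quiver `(Q, I)` is a single point: exactly one vertex and no arrows. -/
def QuiverIsPoint (Q : GentleData) : Prop :=
  (∃ v : Q.V, ∀ w : Q.V, w = v) ∧ IsEmpty Q.A

/-- `v` is a common vertex of two distinct oriented cycles with full relations. -/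
def TwoCyclesAt (Q : GentleData) (v : Q.V) : Prop :=
  ∃ (ℓ ℓ' : ℕ), 1 ≤ ℓ ∧ 1 ≤ ℓ' ∧ ∃ (c : ZMod ℓ → Q.A) (c' : ZMod ℓ' → Q.A),
    IsOCFCycle Q c ∧ IsOCFCycle Q c' ∧ Function.Injective c ∧ Function.Injective c' ∧
    (∃ i, Q.tgt (c i) = v) ∧ (∃ j, Q.tgt (c' j) = v) ∧ Set.range c ≠ Set.range c'

/-- The set of vertices lying on an oriented cycle with full relations. -/
def ocfVertexSet (Q : GentleData) : Set Q.V :=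
  {v | ∃ a : Q.A, OnOCFCycle Q a ∧ Q.tgt a = v}

/-- Oriented cycles with full relations, identified up to cyclic rotation. -/
def ocfCycleSetoid (Q : GentleData) (ℓ : ℕ) :
    Setoid {c : ZMod ℓ → Q.A // IsOCFCycle Q c ∧ Function.Injective c} where
  r c c' := ∃ t : ZMod ℓ, ∀ i, c'.1 i = c.1 (i + t)
  iseqv := by
    refine ⟨fun c => ⟨0, fun i => by rw [add_zero]⟩, ?_, ?_⟩
    · rintro c c' ⟨t, ht⟩
      exact ⟨-t, fun i => by rw [ht (i + -t), neg_add_cancel_right]⟩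
    · rintro a b c ⟨t, ht⟩ ⟨s, hs⟩
      exact ⟨s + t, fun i => by rw [hs i, ht (i + s), add_assoc]⟩

/-- `AGzero Q ℓ` is the value `φ_A(0, ℓ)` of the AG-invariant: the number of
oriented cycles of length `ℓ` with full relations, counted up to rotation. -/
noncomputable def AGzero (Q : GentleData) (ℓ : ℕ) : ℕ :=
  Nat.card (Quotient (ocfCycleSetoid Q ℓ))

/-- A (nontrivial) forbidden path with arrows `p 0, …, p (m-1)`:
all consecutive length-two subpaths lie in `I`. -/
def IsForbiddenPath (Q : GentleData) (m : ℕ) (p : ℕ → Q.A) : Prop :=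
  ∀ i : ℕ, i + 1 < m → Q.tgt (p i) = Q.src (p (i + 1)) ∧ Q.rel (p i) (p (i + 1))

/-- A (nontrivial) forbidden thread: a maximal forbidden path (of `m ≥ 1`
arrows), i.e. one which cannot be extended on either side. -/
def IsForbiddenThread (Q : GentleData) (m : ℕ) (p : ℕ → Q.A) : Prop :=
  1 ≤ m ∧ IsForbiddenPath Q m p ∧
  (∀ b : Q.A, Q.tgt b = Q.src (p 0) → ¬ Q.rel b (p 0)) ∧
  (∀ b : Q.A, Q.src b = Q.tgt (p (m - 1)) → ¬ Q.rel (p (m - 1)) b)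

/-- A trivial forbidden thread at a vertex `v` (of length `0`). -/
def IsTrivialForbiddenThread (Q : GentleData) (v : Q.V) : Prop :=
  ({a : Q.A | Q.tgt a = v} = ∅) ∨ ({a : Q.A | Q.src a = v} = ∅) ∨
  (∃ b b' : Q.A, {a : Q.A | Q.tgt a = v} = {b} ∧ {a : Q.A | Q.src a = v} = {b'} ∧ ¬ Q.rel b b')

/-- The set of lengths of the forbidden threads of finite length. -/
def finiteForbiddenThreadLengths (Q : GentleData) : Set ℕ∞ :=
  {n : ℕ∞ | (n = 0 ∧ ∃ v : Q.V, IsTrivialForbiddenThread Q v) ∨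
    (∃ m : ℕ, n = (m : ℕ∞) ∧ ∃ p : ℕ → Q.A, IsForbiddenThread Q m p)}

/-- The set of lengths of all forbidden threads; an oriented cycle with full
relations gives rise to a forbidden thread of infinite length. -/
def forbiddenThreadLengths (Q : GentleData) : Set ℕ∞ :=
  finiteForbiddenThreadLengths Q ∪
    {n : ℕ∞ | n = ⊤ ∧ ∃ ℓ : ℕ, 1 ≤ ℓ ∧ ∃ c : ZMod ℓ → Q.A, IsOCFCycle Q c}

section Dimensions

/-- `projDimLE R n M` : the `R`-module `M` admits a projective resolution of
length at most `n`. -/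
def projDimLE (R : Type) [Ring R] (n : ℕ) (M : Type) [AddCommGroup M] [Module R M] : Prop :=
  ∃ (P : ℕ → ModuleCat.{0} R) (d : ∀ i : ℕ, ↥(P (i + 1)) →ₗ[R] ↥(P i)) (ε : ↥(P 0) →ₗ[R] M),
    (∀ i, Module.Projective R ↥(P i)) ∧
    Function.Surjective ε ∧ Function.Exact (d 0) ε ∧
    (∀ i, Function.Exact (d (i + 1)) (d i)) ∧
    (∀ i, n ≤ i → Subsingleton ↥(P (i + 1)))

/-- `injDimLE R n M` : the `R`-module `M` admits an injective coresolution of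
length at most `n`. -/
def injDimLE (R : Type) [Ring R] (n : ℕ) (M : Type) [AddCommGroup M] [Module R M] : Prop :=
  ∃ (E : ℕ → ModuleCat.{0} R) (d : ∀ i : ℕ, ↥(E i) →ₗ[R] ↥(E (i + 1))) (ι : M →ₗ[R] ↥(E 0)),
    (∀ i, Module.Injective R ↥(E i)) ∧
    Function.Injective ι ∧ Function.Exact ι (d 0) ∧
    (∀ i, Function.Exact (d i) (d (i + 1))) ∧
    (∀ i, n ≤ i → Subsingleton ↥(E (i + 1)))

/-- The projective dimension of a module, in `ℕ∞`. -/
noncomputable def projDim (R : Type) [Ring R] (M : Type) [AddCommGroup M] [Module R M] : ℕ∞ :=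
  sInf {n : ℕ∞ | ∃ m : ℕ, n = (m : ℕ∞) ∧ projDimLE R m M}

/-- The injective dimension of a module, in `ℕ∞`. -/
noncomputable def injDim (R : Type) [Ring R] (M : Type) [AddCommGroup M] [Module R M] : ℕ∞ :=
  sInf {n : ℕ∞ | ∃ m : ℕ, n = (m : ℕ∞) ∧ injDimLE R m M}

/-- The global dimension of a ring: the supremum of the projective dimensions
of all finitely generated modules. -/
noncomputable def globalDim (R : Type) [Ring R] : ℕ∞ :=
  ⨆ (M : ModuleCat.{0} R) (_ : Module.Finite R ↥M), projDim R ↥M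

/-- The left self-injective dimension: the injective dimension of `R` as a
left module over itself. -/
noncomputable def leftSelfInjDim (R : Type) [Ring R] : ℕ∞ := injDim R R

/-- The right self-injective dimension: the injective dimension of `R` as a
right module over itself. -/
noncomputable def rightSelfInjDim (R : Type) [Ring R] : ℕ∞ := injDim Rᵐᵒᵖ R

end Dimensions

section Radical

/-- The radical of a module: the intersection of its maximal submodules. -/
def radMod (R : Type) [Ring R] (M : Type) [AddCommGroup M] [Module R M] : Submodule R M :=
  sInf {N : Submodule R M | IsCoatom N}

/-- The top of a module: the quotient by its radical. -/
abbrev topMod (R : Type) [Ring R] (M : Type) [AddCommGroup M] [Module R M] : Type :=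
  M ⧸ radMod R M

/-- The socle of a module: the sum of its simple submodules. -/
def socMod (R : Type) [Ring R] (M : Type) [AddCommGroup M] [Module R M] : Submodule R M :=
  sSup {N : Submodule R M | IsAtom N}

/-- The simple right `A`-module `S(v)` at a vertex `v`, realized as the top of
the indecomposable projective `e_v A`. -/
noncomputable abbrev SimpleAt (k : Type) [Field k] (Q : GentleData) (v : Q.V) : Type :=
  topMod (GentleAlgebra k Q)ᵐᵒᵖ ↥(vertexModule k Q v)

end Radical

section Gorenstein

/-- An indecomposable module: nontrivial, and admitting no nontrivial direct
sum decomposition. -/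
def IndecomposableModule (R : Type) [Ring R] (M : Type) [AddCommGroup M] [Module R M] : Prop :=
  Nontrivial M ∧ ∀ N N' : Submodule R M, IsCompl N N' → N = ⊥ ∨ N' = ⊥

/-- A Gorenstein projective module: a syzygy of an acyclic complex of
projective modules which remains acyclic after applying `Hom(−, R)`. -/
def IsGorensteinProjective (R : Type) [Ring R] (G : Type) [AddCommGroup G] [Module R G] :
    Prop :=
  ∃ (P : ℤ → ModuleCat.{0} R) (d : ∀ n : ℤ, ↥(P n) →ₗ[R] ↥(P (n + 1))),
    (∀ n, Module.Projective R ↥(P n)) ∧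
    (∀ n, Function.Exact (d n) (d (n + 1))) ∧
    (∀ n : ℤ, Function.Exact
      (fun g : ↥(P (n + 1 + 1)) →ₗ[R] R => g ∘ₗ d (n + 1))
      (fun g : ↥(P (n + 1)) →ₗ[R] R => g ∘ₗ d n)) ∧
    Nonempty (G ≃ₗ[R] ↥(LinearMap.range (d (-1))))

/-- An indecomposable non-projective Gorenstein projective module. -/
def IsIndecNonProjGP (R : Type) [Ring R] (M : Type) [AddCommGroup M] [Module R M] : Prop :=
  IndecomposableModule R M ∧ IsGorensteinProjective R M ∧ ¬ Module.Projective R M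

/-- An indecomposable Gorenstein projective module. -/
def IsIndecGP (R : Type) [Ring R] (M : Type) [AddCommGroup M] [Module R M] : Prop :=
  IndecomposableModule R M ∧ IsGorensteinProjective R M

/-- Indecomposable non-projective Gorenstein projective right `A`-modules
(realized as right submodules of `A`), up to isomorphism. -/
noncomputable def npgpSetoid (k : Type) [Field k] (Q : GentleData) :
    Setoid {N : Submodule (GentleAlgebra k Q)ᵐᵒᵖ (GentleAlgebra k Q) //
      IsIndecNonProjGP (GentleAlgebra k Q)ᵐᵒᵖ ↥N} where
  r N N' := Nonempty (↥N.1 ≃ₗ[(GentleAlgebra k Q)ᵐᵒᵖ] ↥N'.1)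
  iseqv := ⟨fun _ => ⟨LinearEquiv.refl _ _⟩, fun ⟨e⟩ => ⟨e.symm⟩, fun ⟨e⟩ ⟨f⟩ => ⟨e.trans f⟩⟩

/-- The number of isomorphism classes of indecomposable non-projective
Gorenstein projective right `A`-modules. -/
noncomputable def numIndecNonProjGP (k : Type) [Field k] (Q : GentleData) : ℕ :=
  Nat.card (Quotient (npgpSetoid k Q))

/-- Indecomposable Gorenstein projective right `A`-modules (realized as right
submodules of `A`), up to isomorphism. -/
noncomputable def gpSetoid (k : Type) [Field k] (Q : GentleData) :
    Setoid {N : Submodule (GentleAlgebra k Q)ᵐᵒᵖ (GentleAlgebra k Q) //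
      IsIndecGP (GentleAlgebra k Q)ᵐᵒᵖ ↥N} where
  r N N' := Nonempty (↥N.1 ≃ₗ[(GentleAlgebra k Q)ᵐᵒᵖ] ↥N'.1)
  iseqv := ⟨fun _ => ⟨LinearEquiv.refl _ _⟩, fun ⟨e⟩ => ⟨e.symm⟩, fun ⟨e⟩ ⟨f⟩ => ⟨e.trans f⟩⟩

end Gorenstein

section Strings

/-- A walk in the quiver: `len` letters, the `i`-th letter (for `1 ≤ i ≤ len`)
joining the vertex `vtx (i-1)` to `vtx i`; a letter `(a, true)` is the arrow
`a` read forwards (direct), and `(a, false)` is its formal inverse. -/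
structure StrWalk (Q : GentleData) : Type where
  len : ℕ
  vtx : ℕ → Q.V
  letter : ℕ → Q.A × Bool

/-- The walk is a string: letters join consecutive vertices, the walk is
reduced (no `a a⁻` nor `a⁻ a`), and it avoids the relations. -/
def IsString (Q : GentleData) (w : StrWalk Q) : Prop :=
  (∀ i : ℕ, 1 ≤ i → i ≤ w.len →
    ((w.letter i).2 = true →
      Q.src (w.letter i).1 = w.vtx (i - 1) ∧ Q.tgt (w.letter i).1 = w.vtx i) ∧
    ((w.letter i).2 = false →
      Q.tgt (w.letter i).1 = w.vtx (i - 1) ∧ Q.src (w.letter i).1 = w.vtx i)) ∧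
  (∀ i : ℕ, 1 ≤ i → i + 1 ≤ w.len →
    (¬ ((w.letter i).1 = (w.letter (i + 1)).1 ∧ (w.letter i).2 ≠ (w.letter (i + 1)).2)) ∧
    ((w.letter i).2 = true → (w.letter (i + 1)).2 = true →
      ¬ Q.rel (w.letter i).1 (w.letter (i + 1)).1) ∧
    ((w.letter i).2 = false → (w.letter (i + 1)).2 = false →
      ¬ Q.rel (w.letter (i + 1)).1 (w.letter i).1))

/-- `M` is the string module `M(w)` of the string `w`: it has a `k`-basis
indexed by the vertices `0, …, len` of the walk, the idempotent of a vertex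
fixes exactly the basis vectors sitting at that vertex, and an arrow moves
basis vectors along the corresponding letters of the walk. -/
def IsStringModule (k : Type) [Field k] (Q : GentleData) (w : StrWalk Q) (M : Type)
    [AddCommGroup M] [Module k M] [Module (GentleAlgebra k Q)ᵐᵒᵖ M] : Prop :=
  (∀ (c : k) (m : M), (algebraMap k (GentleAlgebra k Q)ᵐᵒᵖ c) • m = c • m) ∧
  ∃ b : ℕ → M,
    LinearIndependent k (fun i : Fin (w.len + 1) => b i) ∧
    Submodule.span k (b '' {i : ℕ | i ≤ w.len}) = ⊤ ∧
    (∀ i : ℕ, i ≤ w.len → ∀ v : Q.V,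
      (op (idemOf k Q v)) • b i = if w.vtx i = v then b i else 0) ∧
    (∀ i : ℕ, i ≤ w.len → ∀ a : Q.A,
      (op (arrOf k Q a)) • b i =
        (if i + 1 ≤ w.len ∧ w.letter (i + 1) = (a, true) then b (i + 1) else 0) +
        (if 1 ≤ i ∧ w.letter i = (a, false) then b (i - 1) else 0))

/-- The vertex at position `i` is a source of the walk: the adjacent letters
point away from it. -/
def sourceAt (Q : GentleData) (w : StrWalk Q) (i : ℕ) : Prop :=
  i ≤ w.len ∧ (i = 0 ∨ (w.letter i).2 = false) ∧ (i = w.len ∨ (w.letter (i + 1)).2 = true)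

/-- The vertex at position `i` is a sink of the walk: the adjacent letters
point towards it. -/
def sinkAt (Q : GentleData) (w : StrWalk Q) (i : ℕ) : Prop :=
  i ≤ w.len ∧ (i = 0 ∨ (w.letter i).2 = true) ∧ (i = w.len ∨ (w.letter (i + 1)).2 = false)

/-- Left maximality of the inverse prefix (letters `1, …, i`) of a walk of the
shape "inverse prefix followed by direct suffix": the underlying direct path
out of the vertex at position `i` cannot be prolonged (and, when the prefix is
trivial, no second arrow leaves the starting vertex). -/
def LeftMaxAt (Q : GentleData) (w : StrWalk Q) (i : ℕ) : Prop :=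
  if 1 ≤ i then ∀ α : Q.A, Q.src α = w.vtx 0 → Q.rel (w.letter 1).1 α
  else ∀ α : Q.A, Q.src α = w.vtx 0 → (1 ≤ w.len ∧ α = (w.letter 1).1)

/-- Right maximality of the direct suffix (letters `i+1, …, len`) of a walk of
the shape "inverse prefix followed by direct suffix". -/
def RightMaxAt (Q : GentleData) (w : StrWalk Q) (i : ℕ) : Prop :=
  if i < w.len then ∀ β : Q.A, Q.src β = w.vtx w.len → Q.rel (w.letter w.len).1 β
  else ∀ β : Q.A, Q.src β = w.vtx w.len → (1 ≤ w.len ∧ β = (w.letter w.len).1)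

end Strings

/-!
Left modules are tested against the left ideals `A x_a` generated by the arrows. Homomorphisms
`A x_a → N` are the elements of `N` satisfying the obvious necessary conditions for being of the
form `x_a y` (`IsDividend`), because the left annihilator of `x_a` in `A e` is generated by the
arrows `c` with `c a ∈ I`. The radical of `A` is `⨁ A x_a` with semisimple quotient, so `N` is
injective as soon as homomorphisms from the radical extend to `A`.

If `b a ∈ I` then the first syzygy of `A x_a` is `A x_b`, and `b` is unique. So embedding `N` in an
injective module moves the extension condition one step back along the relations: `N` has injective
dimension at most `d + 1` if and only if homomorphisms `A x_b → N` extend to `A` for every `b` that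
starts a chain of `d + 1` relations. For `N = A` they extend if and only if `b` ends a relation.
The relations form a partial injection on the finite set of arrows, hence every arrow starting a
long enough chain ends a relation, and reversing all arrows gives an equivalent condition. Since
`Aᵒᵖ` is the algebra of the opposite quiver, this bounds both self-injective dimensions and shows
that they are equal.
-/

section BaerAt

variable {R N : Type*} [Ring R] [AddCommGroup N] [Module R N]

/-- Baer's extension property at a single left ideal: every linear map `I → N` is given by acting
on one element of `N`. -/
def IsBaerAt (I : Ideal R) (N : Type*) [AddCommGroup N] [Module R N] : Prop :=
  ∀ g : I →ₗ[R] N, ∃ y : N, ∀ r : I, (r : R) • y = g r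

theorem isBaerAt_top : IsBaerAt (⊤ : Ideal R) N := fun g =>
  ⟨g ⟨1, trivial⟩, fun r => by rw [← map_smul]; congr 1; ext; simp⟩

theorem baer_of_isBaerAt (h : ∀ I : Ideal R, IsBaerAt I N) : Module.Baer R N := fun I g =>
  let ⟨y, hy⟩ := h I g
  ⟨LinearMap.toSpanSingleton R N y, fun r hr => hy ⟨r, hr⟩⟩

theorem IsBaerAt.of_le {J I : Ideal R} [IsSemisimpleModule R (R ⧸ J)] (hJ : IsBaerAt J N)
    (hJI : J ≤ I) : IsBaerAt I N := by
  intro g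
  obtain ⟨y, hy⟩ := hJ (g ∘ₗ Submodule.inclusion hJI)
  obtain ⟨L, hdisjoint, hcodisjoint⟩ := exists_isCompl (Submodule.map J.mkQ I)
  obtain ⟨_, l, ⟨p, hp, rfl⟩, hl, hpl⟩ :=
    Submodule.codisjoint_iff_exists_add_eq.1 hcodisjoint (J.mkQ 1)
  have hrest : ∀ r ∈ I, r * (1 - p) ∈ J := by
    intro r hr
    rw [← Submodule.Quotient.mk_eq_zero, ← Submodule.mkQ_apply]
    refine Submodule.disjoint_def.1 hdisjoint _ (Submodule.mem_map_of_mem ?_) ?_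
    · rw [mul_sub, mul_one]
      exact I.sub_mem hr (I.mul_mem_left r hp)
    · rw [← smul_eq_mul, map_smul, map_sub, ← hpl, add_sub_cancel_left]
      exact L.smul_mem r hl
  refine ⟨y + (g ⟨p, hp⟩ - p • y), fun r => ?_⟩
  calc (r : R) • (y + (g ⟨p, hp⟩ - p • y))
      = ((r : R) * (1 - p)) • y + (r : R) • g ⟨p, hp⟩ := by
        rw [mul_sub, mul_one, sub_smul, mul_smul, smul_add, smul_sub]; abel
    _ = g ⟨r * (1 - p), hJI (hrest r r.2)⟩ + g ((r : R) • ⟨p, hp⟩) := by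
        rw [hy ⟨_, hrest r r.2⟩, map_smul]; rfl
    _ = g r := by
        rw [← map_add]
        congr 1
        ext
        simp [mul_sub]

/-- Extend first over `I ⊔ R z`, where the value at `z` only has to be compatible with
`{r | r z ∈ I}`. -/
theorem IsBaerAt.of_comap {I : Ideal R} {z : R}
    (hcolon : IsBaerAt (Submodule.comap (LinearMap.toSpanSingleton R R z) I) N)
    (hsup : IsBaerAt (I ⊔ R ∙ z) N) : IsBaerAt I N := by
  intro g
  obtain ⟨y, hy⟩ := hcolon (g ∘ₗ (LinearMap.toSpanSingleton R R z).restrict fun _ hr => hr)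
  have hval : ∀ (r : R) (hr : r * z ∈ I), r • y = g ⟨r * z, hr⟩ := fun r hr => hy ⟨r, hr⟩
  let f₁ : R →ₗ.[R] N := ⟨I, g⟩
  let f₂ : R →ₗ.[R] N := LinearPMap.mkSpanSingleton' z y fun r hr => by
    rw [smul_eq_mul] at hr
    rw [RingHom.id_apply, hval r (hr ▸ I.zero_mem)]
    simp only [hr]
    exact map_zero g
  have hagree : ∀ (p : f₁.domain) (q : f₂.domain), (p : R) = q → f₁ p = f₂ q := by
    rintro ⟨p, hp⟩ ⟨q, hq⟩ (rfl : p = q)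
    obtain ⟨r, rfl⟩ := Submodule.mem_span_singleton.1 hq
    rw [LinearPMap.mkSpanSingleton'_apply, RingHom.id_apply, hval r hp]
    rfl
  obtain ⟨t, ht⟩ := hsup (f₁.sup f₂ hagree).toFun
  refine ⟨t, fun r => ?_⟩
  have hr : (r : R) ∈ I ⊔ R ∙ z := le_sup_left (a := I) r.2
  rw [ht ⟨r, hr⟩]
  exact ((LinearPMap.left_le_sup f₁ f₂ hagree).2 (x := r) (y := ⟨r, hr⟩) rfl).symm

open Pointwise in
/-- If `s ^ m = 0`, then any left ideal `I ≠ R` has an element `z ∉ I` with `s z ⊆ I`, and Baer's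
property passes from `span s` to `{r | r z ∈ I} ⊇ span s` and from `I ⊔ R z` to `I`. -/
theorem baer_of_isBaerAt_span [IsNoetherianRing R] {s : Set R} {m : ℕ}
    [IsSemisimpleModule R (R ⧸ Ideal.span s)] (hs : s ^ m ⊆ 0) (h : IsBaerAt (Ideal.span s) N) :
    Module.Baer R N := by
  refine baer_of_isBaerAt fun I => ?_
  induction I using WellFoundedGT.induction with
  | ind I ih =>
  obtain rfl | hI := eq_or_ne I ⊤
  · exact isBaerAt_top
  obtain ⟨z, hz, hsz⟩ : ∃ z ∉ I, ∀ x ∈ s, x * z ∈ I := by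
    by_contra! hcon
    have hpow : ∀ n : ℕ, ∃ z ∈ s ^ n, z ∉ I := by
      intro n
      induction n with
      | zero => exact ⟨1, by simp, (Ideal.ne_top_iff_one I).1 hI⟩
      | succ n ihn =>
        obtain ⟨z, hzs, hz⟩ := ihn
        obtain ⟨x, hx, hxz⟩ := hcon z hz
        exact ⟨x * z, pow_succ' s n ▸ Set.mul_mem_mul hx hzs, hxz⟩
    obtain ⟨z, hzs, hz⟩ := hpow m
    exact hz (Set.mem_zero.1 (hs hzs) ▸ I.zero_mem)
  exact IsBaerAt.of_comap (h.of_le (Ideal.span_le.2 hsz)) (ih _ (left_lt_sup.2 fun hle =>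
    hz (hle (Submodule.mem_span_singleton_self z))))

theorem exists_smul_eq_of_baer {ι : Type*} [Fintype ι] (hN : Module.Baer R N)
    (x : ι → R) (n : ι → N) (h : ∀ r : ι → R, ∑ i, r i * x i = 0 → ∑ i, r i • n i = 0) :
    ∃ y : N, ∀ i, x i • y = n i := by
  classical
  let φ : (ι → R) →ₗ[R] R := Fintype.linearCombination R x
  let ψ : (ι → R) →ₗ[R] N := Fintype.linearCombination R n
  have hker : LinearMap.ker φ ≤ LinearMap.ker ψ := h
  obtain ⟨f, hf⟩ := hN.extension_property ((LinearMap.ker φ).liftQ φ le_rfl)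
    (LinearMap.ker_eq_bot.1 (Submodule.ker_liftQ_eq_bot _ _ _ le_rfl))
    ((LinearMap.ker φ).liftQ ψ hker)
  have hfφ : ∀ r, f (φ r) = ψ r := fun r =>
    LinearMap.congr_fun hf (Submodule.Quotient.mk r)
  refine ⟨f 1, fun i => ?_⟩
  calc x i • f 1 = f (φ (Pi.single i 1)) := by
        rw [← map_smul, smul_eq_mul, mul_one, Fintype.linearCombination_apply_single, one_smul]
    _ = n i := by rw [hfφ, Fintype.linearCombination_apply_single, one_smul]

end BaerAt

section InjectiveDimension

variable {R : Type} [Ring R] {M E K : Type} [AddCommGroup M] [Module R M] [AddCommGroup E]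
  [Module R E] [AddCommGroup K] [Module R K]

theorem exists_injective_embedding (R M : Type) [Ring R] [AddCommGroup M] [Module R M] :
    ∃ (E : ModuleCat.{0} R) (i : M →ₗ[R] E), Module.Injective R E ∧ Function.Injective i :=
  ⟨_, (CategoryTheory.Injective.ι (ModuleCat.of R M)).hom,
    (Module.injective_iff_injective_object R _).2 (CategoryTheory.Injective.injective_under _),
    (ModuleCat.mono_iff_injective _).1 inferInstance⟩

theorem injDimLE_zero_iff : injDimLE R 0 M ↔ Module.Injective R M := by
  constructor
  · rintro ⟨E, d, i, hE, hi, hexact, -, hsub⟩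
    have := hsub 0 le_rfl
    have hsurj : Function.Surjective i := fun y => (hexact y).1 (Subsingleton.elim _ _)
    exact Module.Baer.iff_injective.1 ((Module.Baer.iff_injective.2 (hE 0)).of_equiv
      (LinearEquiv.ofBijective i ⟨hi, hsurj⟩).symm)
  · intro hM
    refine ⟨fun n => match n with | 0 => ModuleCat.of R M | _ + 1 => ModuleCat.of R PUnit,
      fun _ => 0, LinearMap.id, ?_, Function.injective_id, fun y => by simp,
      fun _ _ => ⟨fun _ => ⟨0, Subsingleton.elim (α := PUnit) _ _⟩, fun _ => rfl⟩,
      fun _ _ => inferInstanceAs (Subsingleton PUnit)⟩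
    rintro (_ | n)
    · exact hM
    · exact ⟨fun X Y _ _ _ _ f _ g => ⟨0, fun _ => rfl⟩⟩

theorem exists_shortExact_of_injDimLE_succ {n : ℕ} (hM : injDimLE R (n + 1) M) :
    ∃ (E K : ModuleCat.{0} R) (i : M →ₗ[R] E) (p : E →ₗ[R] K), Module.Injective R E ∧
      Function.Injective i ∧ Function.Surjective p ∧ Function.Exact i p ∧ injDimLE R n K := by
  obtain ⟨E, d, i, hE, hi, hexact, hd, hsub⟩ := hM
  refine ⟨E 0, ModuleCat.of R (LinearMap.range (d 0)), i, (d 0).rangeRestrict, hE 0, hi,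
    LinearMap.surjective_rangeRestrict _,
    fun y => Subtype.ext_iff.trans (hexact y), fun j => E (j + 1), fun j => d (j + 1),
    (LinearMap.range (d 0)).subtype, fun j => hE _, Subtype.val_injective, fun y => ?_,
    fun j => hd _, fun j hj => hsub _ (Nat.succ_le_succ hj)⟩
  rw [hd 0 y]
  exact (Set.ext_iff.1 Subtype.range_val y).symm

theorem injDimLE_succ_of_shortExact {n : ℕ} {i : M →ₗ[R] E} {p : E →ₗ[R] K}
    (hE : Module.Injective R E) (hi : Function.Injective i) (hp : Function.Surjective p)
    (hip : Function.Exact i p) (hK : injDimLE R n K) : injDimLE R (n + 1) M := by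
  obtain ⟨F, d, j, hF, hj, hexact, hd, hsub⟩ := hK
  let G : ℕ → ModuleCat.{0} R
    | 0 => ModuleCat.of R E
    | m + 1 => F m
  let δ : ∀ m, G m ⟶ G (m + 1)
    | 0 => ModuleCat.ofHom (j ∘ₗ p)
    | m + 1 => ModuleCat.ofHom (d m)
  refine ⟨G, fun m => (δ m).hom, i, ?_, hi, fun y => ?_, ?_, ?_⟩
  · rintro (_ | m)
    exacts [hE, hF m]
  · exact (map_eq_zero_iff j hj).trans (hip y)
  · rintro (_ | m)
    · intro y
      exact (hexact y).trans (Set.ext_iff.1 (hp.range_comp j) y).symm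
    · exact hd m
  · rintro (_ | m) hm
    · omega
    · exact hsub m (by omega)

theorem injDimLE_succ_iff {n : ℕ} {P : Prop}
    (h : ∀ (E K : ModuleCat.{0} R) (i : M →ₗ[R] E) (p : E →ₗ[R] K), Module.Injective R E →
      Function.Injective i → Function.Surjective p → Function.Exact i p → (injDimLE R n K ↔ P)) :
    injDimLE R (n + 1) M ↔ P := by
  constructor
  · intro hM
    obtain ⟨E, K, i, p, hE, hi, hp, hip, hK⟩ := exists_shortExact_of_injDimLE_succ hM
    exact (h E K i p hE hi hp hip).1 hK
  · intro hP
    obtain ⟨E, i, hE, hi⟩ := exists_injective_embedding R M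
    have hp : Function.Surjective (LinearMap.range i).mkQ := Submodule.mkQ_surjective _
    have hip : Function.Exact i (LinearMap.range i).mkQ := LinearMap.exact_map_mkQ_range i
    exact injDimLE_succ_of_shortExact hE hi hp hip
      ((h E (ModuleCat.of R (E ⧸ LinearMap.range i)) i _ hE hi hp hip).2 hP)

section RingEquiv

variable {S N : Type} [Ring S] [AddCommGroup N] [Module S N] {n : ℕ} {σ : R ≃+* S} {f : M ≃+ N}

theorem symm_map_smul_of_ringEquiv (hf : ∀ (r : R) (m : M), f (r • m) = σ r • f m) (s : S)
    (y : N) : f.symm (s • y) = σ.symm s • f.symm y :=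
  f.injective (by rw [hf, f.apply_symm_apply, f.apply_symm_apply, σ.apply_symm_apply])

theorem injDimLE_of_ringEquiv (hf : ∀ (r : R) (m : M), f (r • m) = σ r • f m)
    (hM : injDimLE R n M) : injDimLE S n N := by
  obtain ⟨E, d, i, hE, hi, hexact, hd, hsub⟩ := hM
  let res := ModuleCat.restrictScalars (σ.symm : S →+* R)
  have hres : ∀ F : ModuleCat.{0} R, Module.Injective R F → Module.Injective S (res.obj F) := by
    intro F hF
    let := RingHomInvPair.of_ringEquiv σ
    let := RingHomInvPair.of_ringEquiv_symm σ
    let unres : F ≃ₛₗ[RingHomClass.toRingHom σ] res.obj F :=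
      { AddEquiv.refl F with
        map_smul' := fun r y => congrArg (· • y) (σ.symm_apply_apply r).symm }
    exact Module.Injective.of_ringEquiv σ unres
  let ι : N →ₗ[S] res.obj (E 0) :=
    { (i : M →+ E 0).comp (f.symm : N →+ M) with
      map_smul' := fun s y =>
        (congrArg i (symm_map_smul_of_ringEquiv hf s y)).trans (map_smul i _ _) }
  exact ⟨fun j => res.obj (E j), fun j => (res.map (ModuleCat.ofHom (d j))).hom, ι,
    fun j => hres _ (hE j), hi.comp f.symm.injective,
    fun y => (hexact y).trans (Set.ext_iff.1 (f.symm.surjective.range_comp i) y).symm,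
    fun j => hd j, hsub⟩

theorem injDimLE_iff_of_ringEquiv (hf : ∀ (r : R) (m : M), f (r • m) = σ r • f m) :
    injDimLE R n M ↔ injDimLE S n N :=
  ⟨injDimLE_of_ringEquiv hf,
    injDimLE_of_ringEquiv (σ := σ.symm) (f := f.symm) (symm_map_smul_of_ringEquiv hf)⟩

end RingEquiv

theorem injDim_ne_top {n : ℕ} (hM : injDimLE R n M) : injDim R M ≠ ⊤ :=
  ne_top_of_le_ne_top (ENat.natCast_ne_top n) (sInf_le ⟨n, rfl, hM⟩)

theorem injDim_congr {S N : Type} [Ring S] [AddCommGroup N] [Module S N]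
    (h : ∀ n, injDimLE R n M ↔ injDimLE S n N) : injDim R M = injDim S N := by
  simp only [injDim, h]

end InjectiveDimension

section Chains

variable {α : Type*} {r : α → α → Prop}

/-- `HasChain r n a`: there are `a₁, …, aₙ` with `r a a₁`, `r a₁ a₂`, …, `r aₙ₋₁ aₙ`. -/
def HasChain (r : α → α → Prop) : ℕ → α → Prop
  | 0, _ => True
  | n + 1, a => ∃ b, r a b ∧ HasChain r n b

theorem HasChain.of_succ {n : ℕ} : ∀ {a : α}, HasChain r (n + 1) a → HasChain r n a := by
  induction n with
  | zero => exact fun _ => trivial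
  | succ n ih => exact fun ⟨b, hab, hb⟩ => ⟨b, hab, ih hb⟩

theorem antitone_hasChain (r : α → α → Prop) : Antitone fun n => {a | HasChain r n a} :=
  antitone_nat_of_succ_le fun _ _ => HasChain.of_succ

theorem exists_rel_of_forall_exists_rel [Finite α] (hr : Relator.LeftUnique r) {S : Set α}
    (hS : ∀ a ∈ S, ∃ b ∈ S, r a b) : ∀ b ∈ S, ∃ a ∈ S, r a b := by
  choose f hfS hf using fun a : S => hS a a.2
  have hinj : Function.Injective fun a => (⟨f a, hfS a⟩ : S) := by
    intro a b hab
    have hfab : f a = f b := Subtype.ext_iff.1 hab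
    exact Subtype.ext (hr (hf a) (hfab ▸ hf b))
  intro b hb
  obtain ⟨a, ha⟩ := Finite.surjective_of_injective hinj ⟨b, hb⟩
  obtain rfl : f a = b := Subtype.ext_iff.1 ha
  exact ⟨a, a.2, hf a⟩

theorem exists_forall_hasChain_exists_rel [Finite α] (hr : Relator.LeftUnique r) :
    ∃ n, ∀ b, HasChain r (n + 1) b → ∃ a, r a b := by
  obtain ⟨n, hn⟩ := WellFoundedLT.antitone_chain_condition (antitone_hasChain r)
  refine ⟨n, fun b hb => ?_⟩
  have hsucc : ∀ a, HasChain r (n + 1) a → ∃ b, HasChain r (n + 1) b ∧ r a b := by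
    intro a ha
    obtain ⟨b, hab, hb⟩ : HasChain r (n + 2) a :=
      (Set.ext_iff.1 ((hn (n + 1) n.le_succ).symm.trans (hn (n + 2) (by omega))) a).1 ha
    exact ⟨b, hb, hab⟩
  obtain ⟨a, -, hab⟩ := exists_rel_of_forall_exists_rel hr hsucc b hb
  exact ⟨a, hab⟩

theorem biUnique_flip (hr : Relator.BiUnique r) : Relator.BiUnique (flip r) :=
  ⟨fun _ _ _ hac hbc => hr.2 hac hbc, hr.1.flip⟩

theorem exists_rel_of_hasChain_flip [Finite α] (hr : Relator.BiUnique r) {n : ℕ}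
    (h : ∀ b, HasChain r n b → ∃ a, r a b) : ∀ a, HasChain (flip r) n a → ∃ b, r a b := by
  have hpred : ∀ b, HasChain r n b → ∃ a, HasChain r n a ∧ flip r b a := fun b hb =>
    let ⟨a, hab⟩ := h b hb
    ⟨a, HasChain.of_succ ⟨b, hab, hb⟩, hab⟩
  have hsucc : ∀ a, HasChain r n a → ∃ b, HasChain r n b ∧ r a b :=
    exists_rel_of_forall_exists_rel (r := flip r) (biUnique_flip hr).1 hpred
  have hchain : ∀ j m, m + j = n → ∀ a, HasChain r m a → HasChain (flip r) j a →
      HasChain r n a := by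
    intro j
    induction j with
    | zero => rintro m rfl a ha -; exact ha
    | succ j ih =>
      rintro m hmj a ha ⟨b, hba, hb⟩
      obtain ⟨a', ha', hba'⟩ := hsucc b (ih (m + 1) (by omega) b ⟨a, hba, ha⟩ hb)
      exact hr.2 hba' hba ▸ ha'
  intro a ha
  obtain ⟨b, -, hab⟩ := hsucc a (hchain n 0 (zero_add n) a trivial ha)
  exact ⟨b, hab⟩

end Chains

namespace GentleData

/-- The opposite bound quiver: all arrows and relations are reversed. -/
abbrev opp (Q : GentleData) : GentleData where
  V := Q.V
  A := Q.A
  src := Q.tgt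
  tgt := Q.src
  rel := flip Q.rel

/-- The ideal `I` is generated by paths of length two. -/
def IsQuadratic (Q : GentleData) : Prop :=
  ∀ ⦃a b : Q.A⦄, Q.rel a b → Q.tgt a = Q.src b

theorem IsQuadratic.opp {Q : GentleData} (hQ : Q.IsQuadratic) : Q.opp.IsQuadratic :=
  fun _ _ hba => (hQ hba).symm

/-- The ideal `I` is admissible: paths avoiding the relations have bounded length. -/
def IsAdmissible (Q : GentleData) : Prop :=
  ∃ N : ℕ, ∀ p : ℕ → Q.A,
    ¬ ∀ i, i < N → Q.tgt (p i) = Q.src (p (i + 1)) ∧ ¬ Q.rel (p i) (p (i + 1))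

theorem IsAdmissible.opp {Q : GentleData} (hQ : Q.IsAdmissible) : Q.opp.IsAdmissible := by
  obtain ⟨N, hN⟩ := hQ
  refine ⟨N, fun p hp => hN (fun i => p (N - i)) fun i hi => ?_⟩
  obtain ⟨hcomp, hrel⟩ := hp (N - (i + 1)) (by omega)
  rw [show N - (i + 1) + 1 = N - i by omega] at hcomp hrel
  exact ⟨hcomp.symm, hrel⟩

/-- Elements of a ring `B` satisfying the defining relations of `kQ/I`; for a `k`-algebra `B` these
are the same as algebra homomorphisms `kQ/I → B`. -/
structure Realization (Q : GentleData) (B : Type*) [Ring B] where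
  idem : Q.V → B
  arr : Q.A → B
  completeOrthogonalIdempotents : CompleteOrthogonalIdempotents idem
  idem_src_mul (a : Q.A) : idem (Q.src a) * arr a = arr a
  arr_mul_idem_tgt (a : Q.A) : arr a * idem (Q.tgt a) = arr a
  arr_mul_of_rel {a b : Q.A} (h : Q.rel a b) : arr a * arr b = 0

/-- A realization read in the opposite ring, as a realization of the opposite bound quiver. -/
def Realization.op {Q : GentleData} {B : Type*} [Ring B] (ρ : Q.Realization B) :
    Q.opp.Realization Bᵐᵒᵖ where
  idem v := MulOpposite.op (ρ.idem v)
  arr a := MulOpposite.op (ρ.arr a)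
  completeOrthogonalIdempotents := CompleteOrthogonalIdempotents.iff_ortho_complete.2
    ⟨fun _ _ h => congrArg MulOpposite.op (ρ.completeOrthogonalIdempotents.ortho h.symm),
      (map_sum opAddEquiv _ _).symm.trans
        (congrArg MulOpposite.op ρ.completeOrthogonalIdempotents.complete)⟩
  idem_src_mul a := congrArg MulOpposite.op (ρ.arr_mul_idem_tgt a)
  arr_mul_idem_tgt a := congrArg MulOpposite.op (ρ.idem_src_mul a)
  arr_mul_of_rel h := congrArg MulOpposite.op (ρ.arr_mul_of_rel h)

end GentleData

namespace GentleAlgebra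

section Presentation

variable {k : Type} [Field k] {Q : GentleData}

variable (k Q) in
/-- The vertices and arrows of `Q` inside `kQ/I`. -/
noncomputable def generators : Q.Realization (GentleAlgebra k Q) where
  idem := idemOf k Q
  arr := arrOf k Q
  completeOrthogonalIdempotents := CompleteOrthogonalIdempotents.iff_ortho_complete.2
    ⟨fun v w h => by
      simpa only [map_mul, map_zero, idemOf, ofGen] using
        RingQuot.mkAlgHom_rel k (GentleRel.orth (k := k) v w h),
    by
      simpa only [map_sum, map_one, idemOf, ofGen] using
        RingQuot.mkAlgHom_rel k (GentleRel.sum_idem (k := k) (Q := Q))⟩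
  idem_src_mul a := by
    simpa only [map_mul, idemOf, arrOf, ofGen] using
      RingQuot.mkAlgHom_rel k (GentleRel.src_mul (k := k) a)
  arr_mul_idem_tgt a := by
    simpa only [map_mul, idemOf, arrOf, ofGen] using
      RingQuot.mkAlgHom_rel k (GentleRel.mul_tgt (k := k) a)
  arr_mul_of_rel h := by
    simpa only [map_mul, map_zero, idemOf, arrOf, ofGen] using
      RingQuot.mkAlgHom_rel k (GentleRel.relation (k := k) _ _ h)

variable (k Q) in
theorem completeOrthogonalIdempotents_idemOf : CompleteOrthogonalIdempotents (idemOf k Q) :=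
  (generators k Q).completeOrthogonalIdempotents

theorem idemOf_mul_idemOf (v w : Q.V) :
    idemOf k Q v * idemOf k Q w = if v = w then idemOf k Q v else 0 :=
  (completeOrthogonalIdempotents_idemOf k Q).mul_eq v w

theorem idemOf_src_mul_arrOf (a : Q.A) : idemOf k Q (Q.src a) * arrOf k Q a = arrOf k Q a :=
  (generators k Q).idem_src_mul a

theorem arrOf_mul_idemOf_tgt (a : Q.A) : arrOf k Q a * idemOf k Q (Q.tgt a) = arrOf k Q a :=
  (generators k Q).arr_mul_idem_tgt a

theorem arrOf_mul_arrOf_of_rel {a b : Q.A} (h : Q.rel a b) : arrOf k Q a * arrOf k Q b = 0 :=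
  (generators k Q).arr_mul_of_rel h

theorem arrOf_mul_idemOf (a : Q.A) (v : Q.V) :
    arrOf k Q a * idemOf k Q v = if Q.tgt a = v then arrOf k Q a else 0 := by
  rw [← arrOf_mul_idemOf_tgt a, mul_assoc, idemOf_mul_idemOf, mul_ite, mul_zero]

theorem arrOf_mul_arrOf_of_tgt_ne_src {a b : Q.A} (h : Q.tgt a ≠ Q.src b) :
    arrOf k Q a * arrOf k Q b = 0 := by
  rw [← idemOf_src_mul_arrOf b, ← mul_assoc, arrOf_mul_idemOf, if_neg h, zero_mul]

section Lift

variable {B : Type*} [Ring B] [Algebra k B]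

/-- The universal property of `kQ/I`. -/
noncomputable def lift (ρ : Q.Realization B) : GentleAlgebra k Q →ₐ[k] B :=
  RingQuot.liftAlgHom k ⟨FreeAlgebra.lift k fun
    | .vertex v => ρ.idem v
    | .arrow a => ρ.arr a, fun x y h => by
      cases h with
      | idem v => simpa using (ρ.completeOrthogonalIdempotents.idem v).eq
      | orth v w h => simpa using ρ.completeOrthogonalIdempotents.ortho h
      | sum_idem => simpa using ρ.completeOrthogonalIdempotents.complete
      | src_mul a => simpa using ρ.idem_src_mul a
      | mul_tgt a => simpa using ρ.arr_mul_idem_tgt a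
      | relation a b h => simpa using ρ.arr_mul_of_rel h⟩

@[simp]
theorem lift_idemOf (ρ : Q.Realization B) (v : Q.V) : lift ρ (idemOf k Q v) = ρ.idem v :=
  (RingQuot.liftAlgHom_mkAlgHom_apply ..).trans (FreeAlgebra.lift_ι_apply ..)

@[simp]
theorem lift_arrOf (ρ : Q.Realization B) (a : Q.A) : lift ρ (arrOf k Q a) = ρ.arr a :=
  (RingQuot.liftAlgHom_mkAlgHom_apply ..).trans (FreeAlgebra.lift_ι_apply ..)

theorem algHom_ext {f g : GentleAlgebra k Q →ₐ[k] B}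
    (hidem : ∀ v, f (idemOf k Q v) = g (idemOf k Q v))
    (harr : ∀ a, f (arrOf k Q a) = g (arrOf k Q a)) : f = g :=
  RingQuot.ringQuot_ext' k f g <| FreeAlgebra.hom_ext <| funext fun
    | .vertex v => hidem v
    | .arrow a => harr a

end Lift

theorem adjoin_generators :
    Algebra.adjoin k (Set.range (idemOf k Q) ∪ Set.range (arrOf k Q)) = ⊤ := by
  refine top_le_iff.1 fun x _ => ?_
  obtain ⟨p, rfl⟩ := RingQuot.mkAlgHom_surjective k (GentleRel k Q) x
  induction p with
  | grade0 c => exact AlgHom.commutes (RingQuot.mkAlgHom k (GentleRel k Q)) c ▸ algebraMap_mem _ c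
  | grade1 s =>
    cases s with
    | vertex v => exact Algebra.subset_adjoin (.inl ⟨v, rfl⟩)
    | arrow a => exact Algebra.subset_adjoin (.inr ⟨a, rfl⟩)
  | mul p q hp hq =>
    rw [map_mul]
    exact mul_mem (hp trivial) (hq trivial)
  | add p q hp hq =>
    rw [map_add]
    exact add_mem (hp trivial) (hq trivial)

end Presentation

section Opposite

variable (k : Type) [Field k] (Q : GentleData)

/-- Reversal of paths, as a homomorphism into the opposite ring. -/
noncomputable def oppHom : GentleAlgebra k Q →ₐ[k] (GentleAlgebra k Q.opp)ᵐᵒᵖ :=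
  lift (generators k Q.opp).op

theorem oppHom_idemOf (v : Q.V) : oppHom k Q (idemOf k Q v) = op (idemOf k Q.opp v) :=
  lift_idemOf _ v

theorem oppHom_arrOf (a : Q.A) : oppHom k Q (arrOf k Q a) = op (arrOf k Q.opp a) :=
  lift_arrOf _ a

theorem opComm_oppHom_comp_oppHom :
    (AlgHom.opComm (oppHom k Q.opp)).comp (oppHom k Q) = AlgHom.id k (GentleAlgebra k Q) :=
  algHom_ext
    (fun v => by
      rw [AlgHom.comp_apply, oppHom_idemOf]
      exact congrArg unop (oppHom_idemOf k Q.opp v))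
    fun a => by
      rw [AlgHom.comp_apply, oppHom_arrOf]
      exact congrArg unop (oppHom_arrOf k Q.opp a)

theorem unop_oppHom_unop_oppHom (x : GentleAlgebra k Q) :
    unop (oppHom k Q.opp (unop (oppHom k Q x))) = x :=
  DFunLike.congr_fun (opComm_oppHom_comp_oppHom k Q) x

/-- Reversal of paths identifies `(kQ/I)ᵒᵖ` with the algebra of the opposite bound quiver. -/
noncomputable def opEquiv : (GentleAlgebra k Q)ᵐᵒᵖ ≃ₐ[k] GentleAlgebra k Q.opp :=
  AlgEquiv.ofAlgHom (AlgHom.opComm (oppHom k Q)) (oppHom k Q.opp)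
    (opComm_oppHom_comp_oppHom k Q.opp)
    (AlgHom.ext fun x => congrArg op (unop_oppHom_unop_oppHom k Q x.unop))

end Opposite

section Dividends

variable {k : Type} [Field k] {Q : GentleData} {M : Type*} [AddCommGroup M]
  [Module (GentleAlgebra k Q) M]

variable (k) in
/-- The obvious necessary conditions on `n` for the equation `x_a y = n` to be solvable in a left
module; up to sending `x_a` to `n`, such `n` are the homomorphisms out of `A x_a`. -/
def IsDividend (a : Q.A) (n : M) : Prop :=
  idemOf k Q (Q.src a) • n = n ∧ ∀ c, Q.rel c a → arrOf k Q c • n = 0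

theorem isDividend_arrOf_smul (a : Q.A) (y : M) : IsDividend k a (arrOf k Q a • y) :=
  ⟨by rw [← mul_smul, idemOf_src_mul_arrOf],
    fun c hca => by rw [← mul_smul, arrOf_mul_arrOf_of_rel hca, zero_smul]⟩

theorem isDividend_arrOf (a : Q.A) : IsDividend k a (arrOf k Q a) := by
  simpa using isDividend_arrOf_smul (k := k) a (1 : GentleAlgebra k Q)

section Map

variable {N : Type*} [AddCommGroup N] [Module (GentleAlgebra k Q) N] {a : Q.A} {n : M}

theorem IsDividend.map (hn : IsDividend k a n) (f : M →ₗ[GentleAlgebra k Q] N) :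
    IsDividend k a (f n) :=
  ⟨by rw [← map_smul, hn.1], fun c hca => by rw [← map_smul, hn.2 c hca, map_zero]⟩

theorem IsDividend.of_map {f : M →ₗ[GentleAlgebra k Q] N} (hf : Function.Injective f)
    (hn : IsDividend k a (f n)) : IsDividend k a n :=
  ⟨hf (by rw [map_smul, hn.1]), fun c hca => hf (by rw [map_smul, hn.2 c hca, map_zero])⟩

end Map

section Extension

variable [Module k M] [IsScalarTower k (GentleAlgebra k Q) M] {n : Q.A → M}

/-- The extension of the semisimple module `k^V` by `M` on which each arrow `a` sends the basis
vector at its target to `n a`. -/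
noncomputable def extension (hn : ∀ a, IsDividend k a (n a)) :
    Q.Realization (Module.End k ((Q.V → k) × M)) where
  idem v := LinearMap.prodMap (Algebra.lmul k (Q.V → k) (Pi.single v 1))
    (Algebra.lsmul k k M (idemOf k Q v))
  arr a := LinearMap.inr k (Q.V → k) M ∘ₗ
    LinearMap.coprod (LinearMap.toSpanSingleton k M (n a) ∘ₗ LinearMap.proj (Q.tgt a))
      (Algebra.lsmul k k M (arrOf k Q a))
  completeOrthogonalIdempotents := by
    have hsingle := CompleteOrthogonalIdempotents.single (fun _ : Q.V => k)
    have hidem := completeOrthogonalIdempotents_idemOf k Q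
    have hpair : CompleteOrthogonalIdempotents
        fun v => ((Pi.single v 1 : Q.V → k), idemOf k Q v) :=
      CompleteOrthogonalIdempotents.iff_ortho_complete.2
        ⟨fun _ _ h => Prod.ext (hsingle.ortho h) (hidem.ortho h),
          (prod_mk_sum ..).symm.trans (Prod.ext hsingle.complete hidem.complete)⟩
    exact hpair.map ((LinearMap.prodMapRingHom k (Q.V → k) M).comp
      (RingHom.prodMap (Algebra.lmul k (Q.V → k)).toRingHom
        (Algebra.lsmul k k M : GentleAlgebra k Q →ₐ[k] Module.End k M).toRingHom))
  idem_src_mul a := LinearMap.ext fun ⟨t, m⟩ => Prod.ext (mul_zero _) <| by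
      simp [← mul_smul, idemOf_src_mul_arrOf, smul_comm _ (t _) (n a), (hn a).1]
  arr_mul_idem_tgt a := LinearMap.ext fun ⟨t, m⟩ => Prod.ext rfl <| by
    simp [← mul_smul, arrOf_mul_idemOf_tgt]
  arr_mul_of_rel {a b} hab := LinearMap.ext fun ⟨t, m⟩ => Prod.ext rfl <| by
    simp [← mul_smul, arrOf_mul_arrOf_of_rel hab, smul_comm _ (t _) (n b), (hn b).2 a hab]

theorem lift_extension_apply_zero (hn : ∀ a, IsDividend k a (n a)) (r : GentleAlgebra k Q) (m : M) :
    lift (extension hn) r (0, m) = (0, r • m) := by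
  have hr : r ∈ Algebra.adjoin k (Set.range (idemOf k Q) ∪ Set.range (arrOf k Q)) :=
    (adjoin_generators (k := k) (Q := Q)) ▸ Algebra.mem_top
  induction hr using Algebra.adjoin_induction generalizing m with
  | mem x hx =>
    obtain ⟨v, rfl⟩ | ⟨a, rfl⟩ := hx
    · simp [extension]
    · simp [extension]
  | algebraMap c => simp [Algebra.algebraMap_eq_smul_one]
  | add x y _ _ hx hy => simp [hx, hy, add_smul]
  | mul x y _ _ hx hy => simp [hx, hy, mul_smul]

end Extension

theorem sum_smul_eq_zero_of_isDividend {n : Q.A → M} (hn : ∀ a, IsDividend k a (n a))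
    {r : Q.A → GentleAlgebra k Q} (hr : ∑ a, r a * arrOf k Q a = 0) : ∑ a, r a • n a = 0 := by
  let := Module.compHom M (algebraMap k (GentleAlgebra k Q))
  have : IsScalarTower k (GentleAlgebra k Q) M := .of_algebraMap_smul fun _ _ => rfl
  have harr : ∀ a, (extension hn).arr a (1, 0) = (0, n a) := fun a => by simp [extension]
  calc ∑ a, r a • n a
      = (lift (extension hn) (∑ a, r a * arrOf k Q a) (1, 0)).2 := by
        simp [harr, lift_extension_apply_zero, Prod.snd_sum]
    _ = 0 := by rw [hr, map_zero]; rfl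

theorem isDividend_zero (a : Q.A) : IsDividend k a (0 : M) :=
  ⟨smul_zero _, fun _ _ => smul_zero _⟩

theorem isDividend_single {a : Q.A} {n : M} (hn : IsDividend k a n) (b : Q.A) :
    IsDividend k b (Pi.single (M := fun _ => M) a n b) := by
  obtain rfl | hba := eq_or_ne b a
  · rwa [Pi.single_eq_same]
  · rw [Pi.single_eq_of_ne hba]
    exact isDividend_zero b

theorem smul_eq_zero_of_isDividend {a : Q.A} {n : M} (hn : IsDividend k a n)
    {r : GentleAlgebra k Q} (hr : r * arrOf k Q a = 0) : r • n = 0 := by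
  have := sum_smul_eq_zero_of_isDividend (isDividend_single hn) (r := Pi.single a r) ?_
  · simpa [Fintype.sum_eq_single a] using this
  · rwa [Fintype.sum_eq_single a fun b hb => by rw [Pi.single_eq_of_ne hb, zero_mul],
      Pi.single_eq_same]

end Dividends

section Annihilators

variable {k : Type} [Field k] {Q : GentleData}

theorem mul_idemOf_src_mem_span {a : Q.A} {r : GentleAlgebra k Q} (hr : r * arrOf k Q a = 0) :
    r * idemOf k Q (Q.src a) ∈ Ideal.span (arrOf k Q '' {c | Q.rel c a}) := by
  set L := Ideal.span (arrOf k Q '' {c | Q.rel c a})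
  have hdiv : IsDividend k a (L.mkQ (idemOf k Q (Q.src a))) := by
    refine ⟨?_, fun c hca => ?_⟩
    · rw [← map_smul, smul_eq_mul, idemOf_mul_idemOf, if_pos rfl]
    · rw [← map_smul, smul_eq_mul, arrOf_mul_idemOf, Submodule.mkQ_apply,
        Submodule.Quotient.mk_eq_zero]
      split_ifs
      · exact Ideal.subset_span ⟨c, hca, rfl⟩
      · exact L.zero_mem
  rw [← Submodule.Quotient.mk_eq_zero, ← Submodule.mkQ_apply, ← smul_eq_mul, map_smul]
  exact smul_eq_zero_of_isDividend hdiv hr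

theorem idemOf_tgt_mul_mem_span {a : Q.A} {r : GentleAlgebra k Q} (hr : arrOf k Q a * r = 0) :
    idemOf k Q (Q.tgt a) * r ∈
      Submodule.span (GentleAlgebra k Q)ᵐᵒᵖ (arrOf k Q '' {c | Q.rel a c}) := by
  let σ : GentleAlgebra k Q.opp →+* (GentleAlgebra k Q)ᵐᵒᵖ := (oppHom k Q.opp).toRingHom
  let φ : GentleAlgebra k Q.opp →ₛₗ[σ] GentleAlgebra k Q :=
    { toFun := fun x => unop (σ x)
      map_add' := fun x y => congrArg unop (map_add σ x y)
      map_smul' := fun x y => congrArg unop (map_mul σ x y) }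
  have hr' : unop (oppHom k Q r) * arrOf k Q.opp a = 0 := by
    rw [← unop_op (arrOf k Q.opp a), ← oppHom_arrOf, ← unop_mul, ← map_mul, hr, map_zero, unop_zero]
  have hφ : φ (unop (oppHom k Q r) * idemOf k Q.opp (Q.opp.src a)) = idemOf k Q (Q.tgt a) * r := by
    rw [← unop_op (idemOf k Q.opp _), ← oppHom_idemOf, ← unop_mul, ← map_mul]
    exact unop_oppHom_unop_oppHom k Q _
  have hspan : Ideal.span (arrOf k Q.opp '' {c | Q.opp.rel c a}) ≤ Submodule.comap φ
      (Submodule.span (GentleAlgebra k Q)ᵐᵒᵖ (arrOf k Q '' {c | Q.rel a c})) := by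
    rw [Ideal.span_le]
    rintro _ ⟨c, hc, rfl⟩
    exact Submodule.subset_span ⟨c, hc, (congrArg unop (oppHom_arrOf k Q.opp c)).symm⟩
  exact hφ ▸ hspan (mul_idemOf_src_mem_span hr')

end Annihilators

section Structure

variable {k : Type} [Field k] {Q : GentleData}

theorem eq_top_of_one_mem {p : Submodule k (GentleAlgebra k Q)} (hone : 1 ∈ p)
    (hidem : ∀ v, p ≤ p.comap (LinearMap.mulLeft k (idemOf k Q v)))
    (harr : ∀ a, p ≤ p.comap (LinearMap.mulLeft k (arrOf k Q a))) : p = ⊤ := by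
  have hmul : ∀ x ∈ Algebra.adjoin k (Set.range (idemOf k Q) ∪ Set.range (arrOf k Q)),
      p ≤ p.comap (LinearMap.mulLeft k x) := by
    intro x hx
    induction hx using Algebra.adjoin_induction with
    | mem x hx =>
      obtain ⟨v, rfl⟩ | ⟨a, rfl⟩ := hx
      exacts [hidem v, harr a]
    | algebraMap c => exact fun y hy => by simpa [← Algebra.smul_def] using p.smul_mem c hy
    | add x y _ _ hx hy => exact fun z hz => by simpa [add_mul] using p.add_mem (hx hz) (hy hz)
    | mul x y _ _ hx hy => exact fun z hz => by simpa [mul_assoc] using hx (hy hz)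
  rw [adjoin_generators] at hmul
  exact top_le_iff.1 fun x _ => by simpa using hmul x trivial hone

theorem span_idemOf_sup_top_mul_span_arrOf :
    Submodule.span k (Set.range (idemOf k Q)) ⊔ ⊤ * Submodule.span k (Set.range (arrOf k Q)) =
      ⊤ := by
  have hidem : ∀ v, idemOf k Q v ∈ Submodule.span k (Set.range (idemOf k Q)) := fun v =>
    Submodule.subset_span ⟨v, rfl⟩
  have htop_mul : ∀ x, ⊤ * Submodule.span k (Set.range (arrOf k Q)) ≤
      (⊤ * Submodule.span k (Set.range (arrOf k Q))).comap (LinearMap.mulLeft k x) := fun x =>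
    Submodule.mul_le.2 fun y _ z hz => by
      simpa [mul_assoc] using Submodule.mul_mem_mul (Submodule.mem_top (x := x * y)) hz
  refine eq_top_of_one_mem ?_ (fun v => sup_le ?_ ?_) fun a => sup_le ?_ ?_
  · rw [← (completeOrthogonalIdempotents_idemOf k Q).complete]
    exact Submodule.mem_sup_left (Submodule.sum_mem _ fun v _ => hidem v)
  · rw [Submodule.span_le]
    rintro _ ⟨w, rfl⟩
    refine Submodule.mem_sup_left ?_
    rw [LinearMap.mulLeft_apply, idemOf_mul_idemOf]
    split_ifs
    exacts [hidem v, Submodule.zero_mem _]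
  · exact (htop_mul _).trans (Submodule.comap_mono le_sup_right)
  · rw [Submodule.span_le]
    rintro _ ⟨w, rfl⟩
    refine Submodule.mem_sup_right ?_
    rw [LinearMap.mulLeft_apply, arrOf_mul_idemOf]
    split_ifs
    · simpa using Submodule.mul_mem_mul (Submodule.mem_top (x := (1 : GentleAlgebra k Q)))
        (Submodule.subset_span (Set.mem_range_self a))
    · exact Submodule.zero_mem _
  · exact (htop_mul _).trans (Submodule.comap_mono le_sup_right)

variable (k Q) in
/-- The projection of `kQ/I` onto the span of the trivial paths. -/
noncomputable def toVertices : GentleAlgebra k Q →ₐ[k] (Q.V → k) :=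
  lift
    { idem := fun v => Pi.single v 1
      arr := 0
      completeOrthogonalIdempotents := .single _
      idem_src_mul := fun _ => mul_zero _
      arr_mul_idem_tgt := fun _ => zero_mul _
      arr_mul_of_rel := fun _ => mul_zero _ }

@[simp]
theorem toVertices_idemOf (v : Q.V) : toVertices k Q (idemOf k Q v) = Pi.single v 1 :=
  lift_idemOf _ v

@[simp]
theorem toVertices_arrOf (a : Q.A) : toVertices k Q (arrOf k Q a) = 0 :=
  lift_arrOf _ a

theorem toVertices_sum_smul_idemOf (c : Q.V → k) :
    toVertices k Q (∑ v, c v • idemOf k Q v) = c := by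
  simp [← Pi.single_smul, Finset.univ_sum_single]

theorem span_arrOf_le_ker_toVertices :
    Ideal.span (Set.range (arrOf k Q)) ≤ RingHom.ker (toVertices k Q) := by
  rw [Ideal.span_le]
  rintro _ ⟨a, rfl⟩
  exact toVertices_arrOf a

theorem ker_toVertices_le_span_arrOf :
    RingHom.ker (toVertices k Q) ≤ Ideal.span (Set.range (arrOf k Q)) := by
  intro x hx
  have hmul : ⊤ * Submodule.span k (Set.range (arrOf k Q)) ≤
      (Ideal.span (Set.range (arrOf k Q))).restrictScalars k :=
    Submodule.mul_le.2 fun y _ z hz =>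
      Ideal.mul_mem_left _ y (Submodule.span_le_restrictScalars k _ _ hz)
  obtain ⟨s, hs, j, hj, rfl⟩ := Submodule.mem_sup.1
    (span_idemOf_sup_top_mul_span_arrOf (k := k) (Q := Q) ▸ Submodule.mem_top (x := x))
  obtain ⟨c, rfl⟩ := (Submodule.mem_span_range_iff_exists_fun k).1 hs
  have hc : c = 0 := by
    rwa [RingHom.mem_ker, map_add, toVertices_sum_smul_idemOf,
      (RingHom.mem_ker ..).1 (span_arrOf_le_ker_toVertices (hmul hj)), add_zero] at hx
  simpa [hc] using hmul hj

instance : IsSemisimpleModule (GentleAlgebra k Q)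
    (GentleAlgebra k Q ⧸ Ideal.span (Set.range (arrOf k Q))) := by
  let σ : GentleAlgebra k Q →+* (Q.V → k) := (toVertices k Q).toRingHom
  have hσ : Function.Surjective σ := fun c => ⟨_, toVertices_sum_smul_idemOf c⟩
  have : RingHomSurjective σ := ⟨hσ⟩
  let φ := (Ideal.span (Set.range (arrOf k Q))).liftQ σ.toSemilinearMap
    span_arrOf_le_ker_toVertices
  have hφ : Function.Bijective φ :=
    ⟨LinearMap.ker_eq_bot.1 (Submodule.ker_liftQ_eq_bot _ _ _ ker_toVertices_le_span_arrOf),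
      fun c => let ⟨x, hx⟩ := hσ c; ⟨Submodule.Quotient.mk x, hx⟩⟩
  exact (φ.isSemisimpleModule_iff_of_bijective hφ).2 inferInstance

open Pointwise in
theorem exists_path_of_mem_range_arrOf_pow {n : ℕ} {x : GentleAlgebra k Q}
    (hx : x ∈ Set.range (arrOf k Q) ^ (n + 1)) (hx0 : x ≠ 0) :
    ∃ (p : ℕ → Q.A) (y : GentleAlgebra k Q), x = arrOf k Q (p 0) * y ∧
      ∀ i, i < n → Q.tgt (p i) = Q.src (p (i + 1)) ∧ ¬ Q.rel (p i) (p (i + 1)) := by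
  induction n generalizing x with
  | zero =>
    obtain ⟨a, rfl⟩ := (pow_one (Set.range (arrOf k Q))).subset hx
    exact ⟨fun _ => a, 1, (mul_one _).symm, fun i hi => absurd hi i.not_lt_zero⟩
  | succ n ih =>
    obtain ⟨_, ⟨a, rfl⟩, z, hz, rfl⟩ := (pow_succ' (Set.range (arrOf k Q)) (n + 1)).subset hx
    beta_reduce at hx0
    obtain ⟨p, y, rfl, hp⟩ := ih hz (right_ne_zero_of_mul hx0)
    have hne : arrOf k Q a * arrOf k Q (p 0) ≠ 0 := by
      rw [← mul_assoc] at hx0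
      exact left_ne_zero_of_mul hx0
    refine ⟨fun i => i.casesOn a p, _, rfl, ?_⟩
    rintro (_ | i) hi
    · exact ⟨not_imp_comm.1 arrOf_mul_arrOf_of_tgt_ne_src hne, mt arrOf_mul_arrOf_of_rel hne⟩
    · exact hp i (by omega)

open Pointwise in
theorem exists_range_arrOf_pow_subset_zero (hadm : Q.IsAdmissible) :
    ∃ m, Set.range (arrOf k Q) ^ m ⊆ 0 := by
  obtain ⟨N, hN⟩ := hadm
  refine ⟨N + 1, fun x hx => by_contra fun hx0 => ?_⟩
  obtain ⟨p, -, -, hp⟩ := exists_path_of_mem_range_arrOf_pow hx hx0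
  exact hN p hp

theorem exists_fg_sup_top_mul_span_arrOf_pow (n : ℕ) :
    ∃ F : Submodule k (GentleAlgebra k Q),
      F.FG ∧ F ⊔ ⊤ * Submodule.span k (Set.range (arrOf k Q)) ^ n = ⊤ := by
  set J := Submodule.span k (Set.range (arrOf k Q))
  set S := Submodule.span k (Set.range (idemOf k Q))
  have hJ : J.FG := Submodule.fg_span (Set.finite_range _)
  have hS : S.FG := Submodule.fg_span (Set.finite_range _)
  induction n with
  | zero => exact ⟨⊥, Submodule.fg_bot, by rw [pow_zero, mul_one, bot_sup_eq]⟩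
  | succ n ih =>
    obtain ⟨F, hF, hFn⟩ := ih
    refine ⟨F ⊔ S * J ^ n, hF.sup (hS.mul (hJ.pow n)), ?_⟩
    rw [sup_assoc, pow_succ', ← mul_assoc, ← Submodule.sup_mul,
      span_idemOf_sup_top_mul_span_arrOf, hFn]

theorem finite_of_isAdmissible (hadm : Q.IsAdmissible) : Module.Finite k (GentleAlgebra k Q) := by
  obtain ⟨m, hm⟩ := exists_range_arrOf_pow_subset_zero (k := k) hadm
  obtain ⟨F, hF, hFm⟩ := exists_fg_sup_top_mul_span_arrOf_pow (k := k) (Q := Q) m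
  have hbot : Submodule.span k (Set.range (arrOf k Q)) ^ m = ⊥ := by
    rw [Submodule.span_pow, Submodule.span_eq_bot]
    exact hm
  rw [hbot, Submodule.mul_bot, sup_bot_eq] at hFm
  exact ⟨hFm ▸ hF⟩

theorem isNoetherianRing_of_isAdmissible (hadm : Q.IsAdmissible) :
    IsNoetherianRing (GentleAlgebra k Q) :=
  have := finite_of_isAdmissible (k := k) hadm
  IsNoetherianRing.of_finite k (GentleAlgebra k Q)

end Structure

section Divisibility

variable {k : Type} [Field k] {Q : GentleData} {N : Type*} [AddCommGroup N]
  [Module (GentleAlgebra k Q) N]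

variable (k N) in
/-- Every dividend of `x_b` in `N` is a multiple of `x_b`; equivalently
`Ext¹(A / A x_b, N) = 0`. -/
def DivisibleBy (b : Q.A) : Prop :=
  ∀ n : N, IsDividend k b n → ∃ y : N, arrOf k Q b • y = n

variable (k Q N) in
/-- Families of dividends, one for each arrow, have a common quotient in `N`; equivalently
`Ext¹(A / rad A, N) = 0`. -/
def JointlyDivisible : Prop :=
  ∀ n : Q.A → N, (∀ a, IsDividend k a (n a)) → ∃ y : N, ∀ a, arrOf k Q a • y = n a

theorem JointlyDivisible.divisibleBy (hN : JointlyDivisible k Q N) (b : Q.A) :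
    DivisibleBy k N b := fun n hn =>
  let ⟨y, hy⟩ := hN (Pi.single b n) (isDividend_single hn)
  ⟨y, (hy b).trans (Pi.single_eq_same (M := fun _ => N) b n)⟩

theorem jointlyDivisible_of_baer (hN : Module.Baer (GentleAlgebra k Q) N) :
    JointlyDivisible k Q N := fun n hn =>
  exists_smul_eq_of_baer hN (arrOf k Q) n fun _ => sum_smul_eq_zero_of_isDividend hn

theorem JointlyDivisible.isBaerAt_span (hN : JointlyDivisible k Q N) :
    IsBaerAt (Ideal.span (Set.range (arrOf k Q))) N := by
  intro g
  let x : Q.A → Ideal.span (Set.range (arrOf k Q)) := fun a =>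
    ⟨arrOf k Q a, Ideal.subset_span ⟨a, rfl⟩⟩
  have hx : ∀ a, IsDividend k a (x a) := fun a =>
    .of_map (Submodule.injective_subtype _) (isDividend_arrOf a)
  obtain ⟨y, hy⟩ := hN (fun a => g (x a)) fun a => (hx a).map g
  have hg : LinearMap.toSpanSingleton (GentleAlgebra k Q) N y ∘ₗ Submodule.subtype _ = g :=
    (Submodule.linearMap_eq_iff_of_eq_span _ _ rfl).2 (by rintro ⟨_, a, rfl⟩; exact hy a)
  exact ⟨y, LinearMap.congr_fun hg⟩

theorem injective_iff_jointlyDivisible (hadm : Q.IsAdmissible) {N : Type} [AddCommGroup N]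
    [Module (GentleAlgebra k Q) N] :
    Module.Injective (GentleAlgebra k Q) N ↔ JointlyDivisible k Q N := by
  rw [← Module.Baer.iff_injective]
  refine ⟨jointlyDivisible_of_baer, fun hN => ?_⟩
  have := isNoetherianRing_of_isAdmissible (k := k) hadm
  obtain ⟨m, hm⟩ := exists_range_arrOf_pow_subset_zero (k := k) hadm
  exact baer_of_isBaerAt_span hm hN.isBaerAt_span

end Divisibility

section DimensionShift

variable {k : Type} [Field k] {Q : GentleData} {N E K : Type*}
  [AddCommGroup N] [Module (GentleAlgebra k Q) N] [AddCommGroup E] [Module (GentleAlgebra k Q) E]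
  [AddCommGroup K] [Module (GentleAlgebra k Q) K]
  {i : N →ₗ[GentleAlgebra k Q] E} {p : E →ₗ[GentleAlgebra k Q] K}

theorem arrOf_mul_idemOf_src_of_rel (hquad : Q.IsQuadratic) {a b : Q.A}
    (hba : Q.rel b a) : arrOf k Q b * idemOf k Q (Q.src a) = arrOf k Q b :=
  hquad hba ▸ arrOf_mul_idemOf_tgt b

theorem exists_isDividend_lift (hquad : Q.IsQuadratic)
    (hrel : Relator.LeftUnique Q.rel) (hi : Function.Injective i) (hp : Function.Surjective p)
    (hip : Function.Exact i p) {a : Q.A} (hN : ∀ b, Q.rel b a → DivisibleBy k N b) {z : K}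
    (hz : IsDividend k a z) : ∃ m : E, IsDividend k a m ∧ p m = z := by
  obtain ⟨m, rfl⟩ := hp z
  by_cases hb : ∃ b, Q.rel b a
  · obtain ⟨b, hba⟩ := hb
    obtain ⟨n, hn⟩ := (hip (arrOf k Q b • m)).1 (by rw [map_smul, hz.2 b hba])
    obtain ⟨y, rfl⟩ := hN b hba n (.of_map hi (hn ▸ isDividend_arrOf_smul b m))
    refine ⟨idemOf k Q (Q.src a) • (m - i y), ⟨?_, fun c hca => ?_⟩, ?_⟩
    · rw [← mul_smul, idemOf_mul_idemOf, if_pos rfl]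
    · obtain rfl := hrel hba hca
      rw [← mul_smul, arrOf_mul_idemOf_src_of_rel hquad hba, smul_sub, ← hn, map_smul, sub_self]
    · rw [map_smul, map_sub, hip.apply_apply_eq_zero, sub_zero, hz.1]
  · refine ⟨idemOf k Q (Q.src a) • m, ⟨?_, fun c hca => absurd ⟨c, hca⟩ hb⟩, ?_⟩
    · rw [← mul_smul, idemOf_mul_idemOf, if_pos rfl]
    · rw [map_smul, hz.1]

theorem DivisibleBy.of_shortExact (hquad : Q.IsQuadratic)
    (hrel : Relator.LeftUnique Q.rel) (hi : Function.Injective i) (hp : Function.Surjective p)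
    (hip : Function.Exact i p) {a b : Q.A} (hba : Q.rel b a) (hE : DivisibleBy k E b)
    (hK : DivisibleBy k K a) : DivisibleBy k N b := by
  intro n hn
  obtain ⟨m, hm⟩ := hE (i n) (hn.map i)
  have hbm : arrOf k Q b • idemOf k Q (Q.src a) • m = i n := by
    rw [← mul_smul, arrOf_mul_idemOf_src_of_rel hquad hba, hm]
  have hdiv : IsDividend k a (p (idemOf k Q (Q.src a) • m)) := by
    refine ⟨?_, fun c hca => ?_⟩
    · rw [← map_smul, ← mul_smul, idemOf_mul_idemOf, if_pos rfl]
    · obtain rfl := hrel hba hca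
      rw [← map_smul, hbm, hip.apply_apply_eq_zero]
  obtain ⟨z, hz⟩ := hK _ hdiv
  obtain ⟨w, rfl⟩ := hp z
  obtain ⟨y, hy⟩ := (hip (idemOf k Q (Q.src a) • m - arrOf k Q a • w)).1
    (by rw [map_sub, map_smul p (arrOf k Q a), hz, sub_self])
  refine ⟨y, hi ?_⟩
  rw [map_smul, hy, smul_sub, hbm, ← mul_smul, arrOf_mul_arrOf_of_rel hba, zero_smul, sub_zero]

/-- Since `A x_a ≅ A e / A x_b` for the predecessor `b` of `a`, this is dimension shifting along
`0 → A x_b → A e → A x_a → 0`. -/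
theorem divisibleBy_iff_of_shortExact (hquad : Q.IsQuadratic)
    (hrel : Relator.LeftUnique Q.rel) (hi : Function.Injective i) (hp : Function.Surjective p)
    (hip : Function.Exact i p) (hE : JointlyDivisible k Q E) (a : Q.A) :
    DivisibleBy k K a ↔ ∀ b, Q.rel b a → DivisibleBy k N b := by
  refine ⟨fun hK b hba => (hE.divisibleBy b).of_shortExact hquad hrel hi hp hip hba hK,
    fun hN z hz => ?_⟩
  obtain ⟨m, hm, rfl⟩ := exists_isDividend_lift hquad hrel hi hp hip hN hz
  obtain ⟨y, rfl⟩ := hE.divisibleBy a m hm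
  exact ⟨p y, (map_smul p _ y).symm⟩

theorem jointlyDivisible_iff_of_shortExact (hquad : Q.IsQuadratic)
    (hrel : Relator.LeftUnique Q.rel) (hi : Function.Injective i) (hp : Function.Surjective p)
    (hip : Function.Exact i p) (hE : JointlyDivisible k Q E) :
    JointlyDivisible k Q K ↔ ∀ a b, Q.rel b a → DivisibleBy k N b := by
  refine ⟨fun hK a => (divisibleBy_iff_of_shortExact hquad hrel hi hp hip hE a).1
    (hK.divisibleBy a), fun hN z hz => ?_⟩
  choose m hm hpm using fun a => exists_isDividend_lift hquad hrel hi hp hip (hN a) (hz a)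
  obtain ⟨y, hy⟩ := hE m hm
  exact ⟨p y, fun a => by rw [← map_smul, hy, hpm]⟩

end DimensionShift

section InjectiveDimension

variable {k : Type} [Field k] {Q : GentleData} {N E K : Type}
  [AddCommGroup N] [Module (GentleAlgebra k Q) N] [AddCommGroup E] [Module (GentleAlgebra k Q) E]
  [AddCommGroup K] [Module (GentleAlgebra k Q) K]
  {i : N →ₗ[GentleAlgebra k Q] E} {p : E →ₗ[GentleAlgebra k Q] K}

theorem injDimLE_zero_iff_jointlyDivisible (hadm : Q.IsAdmissible) :
    injDimLE (GentleAlgebra k Q) 0 N ↔ JointlyDivisible k Q N :=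
  injDimLE_zero_iff.trans (injective_iff_jointlyDivisible hadm)

theorem injDimLE_iff_divisibleBy_of_shortExact (hquad : Q.IsQuadratic)
    (hrel : Relator.LeftUnique Q.rel) (hadm : Q.IsAdmissible)
    (hE : Module.Injective (GentleAlgebra k Q) E) (hi : Function.Injective i)
    (hp : Function.Surjective p) (hip : Function.Exact i p) (d : ℕ) :
    injDimLE (GentleAlgebra k Q) d K ↔ ∀ b, HasChain Q.rel (d + 1) b → DivisibleBy k N b := by
  have hE_joint := (injective_iff_jointlyDivisible hadm).1 hE
  induction d generalizing N E K with
  | zero =>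
    rw [injDimLE_zero_iff_jointlyDivisible hadm,
      jointlyDivisible_iff_of_shortExact hquad hrel hi hp hip hE_joint]
    exact ⟨fun h b ⟨a, hba, _⟩ => h a b hba, fun h a b hba => h b ⟨a, hba, trivial⟩⟩
  | succ d ih =>
    have hK : injDimLE (GentleAlgebra k Q) (d + 1) K ↔
        ∀ a, HasChain Q.rel (d + 1) a → DivisibleBy k K a :=
      injDimLE_succ_iff fun F L j q hF hj hq hjq =>
        ih hF hj hq hjq ((injective_iff_jointlyDivisible hadm).1 hF)
    simp only [hK, divisibleBy_iff_of_shortExact hquad hrel hi hp hip hE_joint]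
    exact ⟨fun h b ⟨a, hba, ha⟩ => h a ha b hba, fun h a ha b hba => h b ⟨a, hba, ha⟩⟩

theorem injDimLE_succ_iff_divisibleBy (hquad : Q.IsQuadratic)
    (hrel : Relator.LeftUnique Q.rel) (hadm : Q.IsAdmissible) (d : ℕ) :
    injDimLE (GentleAlgebra k Q) (d + 1) N ↔
      ∀ b, HasChain Q.rel (d + 1) b → DivisibleBy k N b :=
  injDimLE_succ_iff fun _ _ _ _ hE hi hp hip =>
    injDimLE_iff_divisibleBy_of_shortExact hquad hrel hadm hE hi hp hip d

end InjectiveDimension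

section RegularModule

variable {k : Type} [Field k] {Q : GentleData}

theorem toVertices_apply_tgt_of_arrOf_mul_eq_zero {a : Q.A} {r : GentleAlgebra k Q}
    (hr : arrOf k Q a * r = 0) : toVertices k Q r (Q.tgt a) = 0 := by
  have hspan : ∀ x ∈ Submodule.span (GentleAlgebra k Q)ᵐᵒᵖ (arrOf k Q '' {c | Q.rel a c}),
      toVertices k Q x = 0 := by
    intro x hx
    induction hx using Submodule.span_induction with
    | mem x hx =>
      obtain ⟨c, -, rfl⟩ := hx
      exact toVertices_arrOf c
    | zero => exact map_zero _
    | add x y _ _ hx hy => rw [map_add, hx, hy, add_zero]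
    | smul s x _ hx => rw [← op_unop s, op_smul_eq_mul, map_mul, hx, zero_mul]
  simpa using congrFun (hspan _ (idemOf_tgt_mul_mem_span hr)) (Q.tgt a)

theorem divisibleBy_regular_iff (hquad : Q.IsQuadratic)
    (hrel : Relator.RightUnique Q.rel) (b : Q.A) :
    DivisibleBy k (GentleAlgebra k Q) b ↔ ∃ c, Q.rel c b := by
  constructor
  · intro hA
    by_contra! hb
    obtain ⟨y, hy⟩ := hA (idemOf k Q (Q.src b))
      ⟨(idemOf_mul_idemOf _ _).trans (if_pos rfl), fun c hcb => absurd hcb (hb c)⟩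
    simpa using congrFun (congrArg (toVertices k Q) hy) (Q.src b)
  · rintro ⟨c, hcb⟩ n hn
    have hmem := idemOf_tgt_mul_mem_span (hn.2 c hcb)
    have hsucc : {d | Q.rel c d} = {b} :=
      Set.ext fun d => ⟨fun hcd => hrel hcd hcb, fun h => h ▸ hcb⟩
    rw [hquad hcb, ← smul_eq_mul, hn.1, hsucc, Set.image_singleton,
      Submodule.mem_span_singleton] at hmem
    obtain ⟨y, rfl⟩ := hmem
    exact ⟨unop y, rfl⟩

theorem injective_tgt_of_jointlyDivisible_regular
    (hA : JointlyDivisible k Q (GentleAlgebra k Q)) : Function.Injective Q.tgt := by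
  intro a b hab
  by_contra hne
  obtain ⟨y, hy⟩ := hA (Pi.single a (arrOf k Q a)) (isDividend_single (isDividend_arrOf a))
  have hya : arrOf k Q a * (1 - y) = 0 := by
    rw [mul_sub, mul_one, ← smul_eq_mul, hy, Pi.single_eq_same, sub_self]
  have hyb : arrOf k Q b * y = 0 := by
    rw [← smul_eq_mul, hy, Pi.single_eq_of_ne (Ne.symm hne)]
  have hval := toVertices_apply_tgt_of_arrOf_mul_eq_zero hya
  rw [hab, map_sub, map_one, Pi.sub_apply, Pi.one_apply,
    toVertices_apply_tgt_of_arrOf_mul_eq_zero hyb, sub_zero] at hval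
  exact one_ne_zero hval

theorem jointlyDivisible_of_divisibleBy {N : Type*} [AddCommGroup N]
    [Module (GentleAlgebra k Q) N] (htgt : Function.Injective Q.tgt)
    (hN : ∀ b : Q.A, DivisibleBy k N b) : JointlyDivisible k Q N := by
  intro n hn
  choose y hy using fun a => hN a (n a) (hn a)
  refine ⟨∑ a, idemOf k Q (Q.tgt a) • y a, fun b => ?_⟩
  rw [Finset.smul_sum,
    Fintype.sum_eq_single b fun a hab => ?_]
  · rw [← mul_smul, arrOf_mul_idemOf_tgt, hy]
  · rw [← mul_smul, arrOf_mul_idemOf, if_neg fun h => hab (htgt h.symm), zero_smul]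

theorem jointlyDivisible_regular_iff (hquad : Q.IsQuadratic)
    (hrel : Relator.RightUnique Q.rel) :
    JointlyDivisible k Q (GentleAlgebra k Q) ↔
      Function.Injective Q.tgt ∧ ∀ b, ∃ c, Q.rel c b := by
  simp only [← divisibleBy_regular_iff (k := k) hquad hrel]
  exact ⟨fun hA => ⟨injective_tgt_of_jointlyDivisible_regular hA, hA.divisibleBy⟩,
    fun hA => jointlyDivisible_of_divisibleBy hA.1 hA.2⟩

end RegularModule

end GentleAlgebra

namespace GentleData

/-- The combinatorial condition on the bound quiver which says that `kQ/I` has injective dimension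
at most `d` as a left module over itself. -/
def SelfInjDimLE (Q : GentleData) : ℕ → Prop
  | 0 => Function.Injective Q.tgt ∧ ∀ b, ∃ a, Q.rel a b
  | d + 1 => ∀ b, HasChain Q.rel (d + 1) b → ∃ a, Q.rel a b

variable {Q : GentleData}

theorem exists_selfInjDimLE (hrel : Relator.LeftUnique Q.rel) : ∃ d, Q.SelfInjDimLE d :=
  let ⟨d, hd⟩ := exists_forall_hasChain_exists_rel hrel
  ⟨d + 1, hd⟩

theorem injective_src_of_injective_tgt (hquad : Q.IsQuadratic)
    (hrel : Relator.RightUnique Q.rel) (htgt : Function.Injective Q.tgt)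
    (hpred : ∀ b, ∃ a, Q.rel a b) : Function.Injective Q.src := by
  intro a b hab
  obtain ⟨c, hca⟩ := hpred a
  obtain ⟨d, hdb⟩ := hpred b
  obtain rfl : c = d := htgt ((hquad hca).trans (hab.trans (hquad hdb).symm))
  exact hrel hca hdb

theorem SelfInjDimLE.opp (hquad : Q.IsQuadratic)
    (hrel : Relator.BiUnique Q.rel) : ∀ {d : ℕ}, Q.SelfInjDimLE d → Q.opp.SelfInjDimLE d
  | 0, ⟨htgt, hpred⟩ => ⟨injective_src_of_injective_tgt hquad hrel.2 htgt hpred, fun a =>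
      exists_rel_of_hasChain_flip (n := 0) hrel (fun b _ => hpred b) a trivial⟩
  | _ + 1, h => exists_rel_of_hasChain_flip hrel h

theorem selfInjDimLE_opp_iff (hquad : Q.IsQuadratic)
    (hrel : Relator.BiUnique Q.rel) {d : ℕ} : Q.opp.SelfInjDimLE d ↔ Q.SelfInjDimLE d :=
  ⟨.opp hquad.opp (biUnique_flip hrel), .opp hquad hrel⟩

end GentleData

section SelfInjectiveDimension

variable {k : Type} [Field k] {Q : GentleData}

theorem injDimLE_left_iff (hquad : Q.IsQuadratic)
    (hrel : Relator.BiUnique Q.rel) (hadm : Q.IsAdmissible) (d : ℕ) :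
    injDimLE (GentleAlgebra k Q) d (GentleAlgebra k Q) ↔ Q.SelfInjDimLE d := by
  cases d with
  | zero =>
    rw [GentleAlgebra.injDimLE_zero_iff_jointlyDivisible hadm]
    exact GentleAlgebra.jointlyDivisible_regular_iff hquad hrel.2
  | succ d =>
    simp only [GentleAlgebra.injDimLE_succ_iff_divisibleBy hquad hrel.1 hadm,
      GentleAlgebra.divisibleBy_regular_iff hquad hrel.2]
    rfl

theorem injDimLE_right_iff (hquad : Q.IsQuadratic)
    (hrel : Relator.BiUnique Q.rel) (hadm : Q.IsAdmissible) (d : ℕ) :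
    injDimLE (GentleAlgebra k Q)ᵐᵒᵖ d (GentleAlgebra k Q) ↔ Q.SelfInjDimLE d := by
  let τ := GentleAlgebra.opEquiv k Q
  have hτ : injDimLE (GentleAlgebra k Q)ᵐᵒᵖ d (GentleAlgebra k Q) ↔
      injDimLE (GentleAlgebra k Q.opp) d (GentleAlgebra k Q.opp) :=
    injDimLE_iff_of_ringEquiv (σ := τ.toRingEquiv) (f := opAddEquiv.trans τ.toAddEquiv)
      fun r x => map_mul τ r (op x)
  rw [hτ, injDimLE_left_iff hquad.opp (biUnique_flip hrel) hadm.opp,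
    GentleData.selfInjDimLE_opp_iff hquad hrel]

end SelfInjectiveDimension

theorem IsGentle.biUnique_rel {Q : GentleData} (hQ : IsGentle Q) : Relator.BiUnique Q.rel := by
  obtain ⟨hcomp, -, -, -, hpred, -, hsucc, -⟩ := hQ
  constructor
  · intro a c b hab hcb
    exact (Set.ncard_le_one_iff (Set.toFinite _)).1 (hpred b)
      ⟨hcomp a b hab, hab⟩ ⟨hcomp c b hcb, hcb⟩
  · intro a b c hab hac
    exact (Set.ncard_le_one_iff (Set.toFinite _)).1 (hsucc a)
      ⟨(hcomp a b hab).symm, hab⟩ ⟨(hcomp a c hac).symm, hac⟩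

theorem gentle_isGorenstein_general (k : Type) [Field k] (Q : GentleData)
    (hquad : Q.IsQuadratic) (hrel : Relator.BiUnique Q.rel)
    (hadm : Q.IsAdmissible) :
    leftSelfInjDim (GentleAlgebra k Q) ≠ ⊤ ∧
    rightSelfInjDim (GentleAlgebra k Q) ≠ ⊤ ∧
    leftSelfInjDim (GentleAlgebra k Q) = rightSelfInjDim (GentleAlgebra k Q) := by
  obtain ⟨d, hd⟩ := GentleData.exists_selfInjDimLE hrel.1
  exact ⟨injDim_ne_top ((injDimLE_left_iff hquad hrel hadm d).2 hd),
    injDim_ne_top ((injDimLE_right_iff hquad hrel hadm d).2 hd),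
    injDim_congr fun n =>
      (injDimLE_left_iff hquad hrel hadm n).trans (injDimLE_right_iff hquad hrel hadm n).symm⟩

/-- Every gentle algebra is Gorenstein: its injective
dimensions as a left and as a right module over itself are finite (and
equal). -/
theorem gentle_isGorenstein
    (k : Type) [Field k] [IsAlgClosed k] (Q : GentleData) (hQ : IsGentle Q) :
    leftSelfInjDim (GentleAlgebra k Q) ≠ ⊤ ∧
    rightSelfInjDim (GentleAlgebra k Q) ≠ ⊤ ∧
    leftSelfInjDim (GentleAlgebra k Q) = rightSelfInjDim (GentleAlgebra k Q) :=
  gentle_isGorenstein_general k Q (fun a b => hQ.1 a b) hQ.biUnique_rel hQ.2.2.2.2.2.2.2
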